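/- Let q, x, y, z be complex numbers with |q| < 1 and |y| < 1, and define H(x,y,z) = Σ_{n=0}^∞ Σ_{c=0}^n (x;q)_n · y^n · q^{c²+c} · z^{2c} · [n choose c]_q (an absolutely convergent series). Then (x·y − q·z²)·H(x, q·y, z) + (1 − y)·H(x, y, z) = −q⁴·(1−x)·y·z⁴·H(q·x, q·y, q·z) + 1 − q·z². -/

import Mathlib

/-- The finite q-Pochhammer symbol `(x;q)_n = ∏_{i=1}^n (1 - x q^{i-1})`. -/
noncomputable def qPoch (q x : ℂ) (n : ℕ) : ℂ := ∏ i ∈ Finset.range n, (1 - x * q ^ i)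

/-- The Gaussian binomial coefficient `[n choose c]_q`. -/
noncomputable def qBinom (q : ℂ) (n c : ℕ) : ℂ :=
  if c ≤ n then qPoch q q n / (qPoch q q c * qPoch q q (n - c)) else 0

/-- `H(x,y,z) = Σ_{n=0}^∞ Σ_{c=0}^n (x;q)_n y^n q^{c²+c} z^{2c} [n choose c]_q`. -/
noncomputable def Hfun (q X Y Z : ℂ) : ℂ :=
  ∑' n : ℕ, ∑ c ∈ Finset.range (n + 1),
    qPoch q X n * Y ^ n * q ^ (c ^ 2 + c) * Z ^ (2 * c) * qBinom q n c

/-!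
With `w = q z²` the inner sum of `H` becomes `Pₙ(w) = ∑ q^{c²} [n choose c] wᶜ`. Each of the two
`q`-Pascal rules gives a recurrence for `Pₙ₊₁`, one in terms of `Pₙ(w)` and `Pₙ(qw)`, the other in
terms of `Pₙ(qw)` and `Pₙ(q²w)`. Eliminating `Pₙ(qw)` leaves
`(1 - qⁿ⁺¹ w) Pₙ₊₁(w) = Pₙ(w) - qⁿ⁺² w² Pₙ(q²w)`, and summing this against `(x;q)ₙ₊₁ yⁿ⁺¹` is the
functional equation, since the factors `qⁿ` replace `y` by `qy`.
-/

open Finset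

lemma not_isOfFinOrder_of_norm_lt_one {R : Type*} [NormedRing R] [NormMulClass R] [NormOneClass R]
    {a : R} (ha : ‖a‖ < 1) : ¬ IsOfFinOrder a :=
  fun h => ha.ne h.norm_eq_one

lemma one_sub_pow_succ_ne_zero {R : Type*} [Ring R] {a : R} (ha : ¬ IsOfFinOrder a) (n : ℕ) :
    1 - a ^ (n + 1) ≠ 0 := fun h =>
  ha (isOfFinOrder_iff_pow_eq_one.2 ⟨n + 1, n.succ_pos, (sub_eq_zero.1 h).symm⟩)

lemma prod_one_add_mul_pow_le_exp {a r : ℝ} (ha : 0 ≤ a) (hr₀ : 0 ≤ r) (hr₁ : r < 1) (n : ℕ) :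
    ∏ i ∈ range n, (1 + a * r ^ i) ≤ Real.exp (a / (1 - r)) := by
  refine (Real.prod_one_add_le_exp_sum _ fun i => by positivity).trans (Real.exp_le_exp.2 ?_)
  rw [← mul_sum, div_eq_mul_inv, ← tsum_geometric_of_lt_one hr₀ hr₁]
  gcongr
  exact (summable_geometric_of_lt_one hr₀ hr₁).sum_le_tsum _ fun i _ => pow_nonneg hr₀ i

section qPoch

variable (q x : ℂ) (n : ℕ)

lemma qPoch_zero : qPoch q x 0 = 1 := prod_range_zero _

lemma qPoch_succ : qPoch q x (n + 1) = qPoch q x n * (1 - x * q ^ n) := prod_range_succ _ n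

lemma qPoch_succ' : qPoch q x (n + 1) = (1 - x) * qPoch q (q * x) n := by
  simp only [qPoch, prod_range_succ', pow_zero, mul_one, pow_succ', mul_left_comm x q, mul_assoc]
  exact mul_comm _ _

lemma norm_qPoch_le_prod : ‖qPoch q x n‖ ≤ ∏ i ∈ range n, (1 + ‖x‖ * ‖q‖ ^ i) := by
  rw [qPoch, norm_prod]
  gcongr with i
  simpa using norm_sub_le 1 (x * q ^ i)

end qPoch

section qBinom

variable {q : ℂ}

lemma qPoch_self_ne_zero (hq : ¬ IsOfFinOrder q) (n : ℕ) : qPoch q q n ≠ 0 :=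
  prod_ne_zero_iff.2 fun i _ => by simpa only [pow_succ'] using one_sub_pow_succ_ne_zero hq i

lemma qBinom_of_le {n c : ℕ} (h : c ≤ n) :
    qBinom q n c = qPoch q q n / (qPoch q q c * qPoch q q (n - c)) := if_pos h

lemma qBinom_eq_zero_of_lt {n c : ℕ} (h : n < c) : qBinom q n c = 0 := if_neg h.not_ge

lemma qBinom_zero_right (hq : ¬ IsOfFinOrder q) (n : ℕ) : qBinom q n 0 = 1 := by
  rw [qBinom_of_le n.zero_le, qPoch_zero, one_mul, Nat.sub_zero,
    div_self (qPoch_self_ne_zero hq n)]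

lemma one_sub_pow_mul_qBinom_succ_succ (hq : ¬ IsOfFinOrder q) (n c : ℕ) :
    (1 - q ^ (c + 1)) * qBinom q (n + 1) (c + 1) = (1 - q ^ (n + 1)) * qBinom q n c := by
  rcases lt_or_ge n c with h | h
  · rw [qBinom_eq_zero_of_lt h, qBinom_eq_zero_of_lt (Nat.succ_lt_succ h), mul_zero, mul_zero]
  · have hc := one_sub_pow_succ_ne_zero hq c
    rw [qBinom_of_le h, qBinom_of_le (Nat.add_le_add_right h 1), Nat.add_sub_add_right,
      qPoch_succ, qPoch_succ, ← pow_succ', ← pow_succ']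
    field_simp

lemma one_sub_pow_mul_qBinom_succ_right (hq : ¬ IsOfFinOrder q) (n c : ℕ) :
    (1 - q ^ (c + 1)) * qBinom q n (c + 1) = (1 - q ^ (n - c)) * qBinom q n c := by
  rcases le_or_gt n c with h | h
  · rw [qBinom_eq_zero_of_lt (Nat.lt_succ_of_le h), Nat.sub_eq_zero_of_le h, pow_zero, sub_self,
      mul_zero, zero_mul]
  · obtain ⟨d, rfl⟩ := Nat.exists_eq_add_of_lt h
    have hc := one_sub_pow_succ_ne_zero hq c
    have hd := one_sub_pow_succ_ne_zero hq d
    rw [qBinom_of_le h, qBinom_of_le h.le, show c + d + 1 - (c + 1) = d by lia,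
      show c + d + 1 - c = d + 1 by lia, qPoch_succ q q c, qPoch_succ q q d,
      ← pow_succ', ← pow_succ']
    field_simp

lemma qBinom_succ_succ (hq : ¬ IsOfFinOrder q) (n c : ℕ) :
    qBinom q (n + 1) (c + 1) = qBinom q n (c + 1) + q ^ (n - c) * qBinom q n c := by
  rcases lt_or_ge n c with h | h
  · simp only [qBinom_eq_zero_of_lt h, qBinom_eq_zero_of_lt (Nat.succ_lt_succ h),
      qBinom_eq_zero_of_lt (h.trans c.lt_succ_self), mul_zero, add_zero]
  · have hpow : q ^ (n - c) * q ^ (c + 1) = q ^ (n + 1) := by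
      rw [← pow_add, ← add_assoc, Nat.sub_add_cancel h]
    refine mul_left_cancel₀ (one_sub_pow_succ_ne_zero hq c) ?_
    linear_combination one_sub_pow_mul_qBinom_succ_succ hq n c
      - one_sub_pow_mul_qBinom_succ_right hq n c + qBinom q n c * hpow

lemma qBinom_succ_succ' (hq : ¬ IsOfFinOrder q) (n c : ℕ) :
    qBinom q (n + 1) (c + 1) = q ^ (c + 1) * qBinom q n (c + 1) + qBinom q n c := by
  linear_combination qBinom_succ_succ hq n c + one_sub_pow_mul_qBinom_succ_right hq n c

end qBinom

/-- The `n`-th Stieltjes–Wigert polynomial, normalized as `∑ q^{c²} [n choose c]_q wᶜ`: the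
classical one is its value at `-w` divided by `(q;q)_n`. -/
noncomputable def stieltjesWigert (q : ℂ) (n : ℕ) (w : ℂ) : ℂ :=
  ∑ c ∈ range (n + 1), qBinom q n c * q ^ c ^ 2 * w ^ c

lemma stieltjesWigert_zero (q w : ℂ) : stieltjesWigert q 0 w = 1 := by
  simp [stieltjesWigert, qBinom_of_le, qPoch_zero]

section stieltjesWigert

variable {q : ℂ}

lemma stieltjesWigert_eq_one_add (hq : ¬ IsOfFinOrder q) (n : ℕ) (w : ℂ) :
    stieltjesWigert q n w =
      1 + ∑ c ∈ range n, qBinom q n (c + 1) * q ^ (c + 1) ^ 2 * w ^ (c + 1) := by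
  simp [stieltjesWigert, sum_range_succ', qBinom_zero_right hq, add_comm]

lemma stieltjesWigert_eq_one_add_succ (hq : ¬ IsOfFinOrder q) (n : ℕ) (w : ℂ) :
    stieltjesWigert q n w =
      1 + ∑ c ∈ range (n + 1), qBinom q n (c + 1) * q ^ (c + 1) ^ 2 * w ^ (c + 1) := by
  rw [stieltjesWigert_eq_one_add hq, sum_range_succ, qBinom_eq_zero_of_lt n.lt_succ_self,
    zero_mul, zero_mul, add_zero]

lemma stieltjesWigert_succ (hq : ¬ IsOfFinOrder q) (n : ℕ) (w : ℂ) :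
    stieltjesWigert q (n + 1) w =
      stieltjesWigert q n w + q ^ (n + 1) * w * stieltjesWigert q n (q * w) := by
  rw [stieltjesWigert_eq_one_add hq (n + 1), stieltjesWigert_eq_one_add_succ hq n w,
    stieltjesWigert, mul_sum, add_assoc, ← sum_add_distrib]
  congr 1
  refine sum_congr rfl fun c hc => ?_
  have hpow : q ^ (n - c) * q ^ (c + 1) ^ 2 = q ^ (n + 1) * q ^ c ^ 2 * q ^ c := by
    have hcn := mem_range_succ_iff.1 hc
    rw [← pow_add, ← pow_add, ← pow_add]
    congr 1
    lia
  linear_combination (q ^ (c + 1) ^ 2 * w ^ (c + 1)) * qBinom_succ_succ hq n c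
    + qBinom q n c * w ^ (c + 1) * hpow

lemma stieltjesWigert_succ' (hq : ¬ IsOfFinOrder q) (n : ℕ) (w : ℂ) :
    stieltjesWigert q (n + 1) w =
      stieltjesWigert q n (q * w) + q * w * stieltjesWigert q n (q ^ 2 * w) := by
  rw [stieltjesWigert_eq_one_add hq (n + 1), stieltjesWigert_eq_one_add_succ hq n (q * w),
    stieltjesWigert, mul_sum, add_assoc, ← sum_add_distrib]
  congr 1
  refine sum_congr rfl fun c _ => ?_
  rw [qBinom_succ_succ' hq]
  ring

lemma one_sub_mul_stieltjesWigert_succ (hq : ¬ IsOfFinOrder q) (n : ℕ) (w : ℂ) :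
    (1 - q ^ (n + 1) * w) * stieltjesWigert q (n + 1) w =
      stieltjesWigert q n w - q ^ (n + 2) * w ^ 2 * stieltjesWigert q n (q ^ 2 * w) := by
  linear_combination
    stieltjesWigert_succ hq n w - q ^ (n + 1) * w * stieltjesWigert_succ' hq n w

lemma norm_stieltjesWigert_le_prod (hq : ¬ IsOfFinOrder q) (hq_le : ‖q‖ ≤ 1) (n : ℕ) (w : ℂ) :
    ‖stieltjesWigert q n w‖ ≤ ∏ i ∈ range n, (1 + ‖w‖ * ‖q‖ ^ i) := by
  induction n generalizing w with
  | zero => simp [stieltjesWigert_zero]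
  | succ n ih =>
    have hqw : ‖q * w‖ ≤ ‖w‖ := by
      rw [norm_mul]
      exact mul_le_of_le_one_left (norm_nonneg w) hq_le
    have ih_mul : ‖stieltjesWigert q n (q * w)‖ ≤ ∏ i ∈ range n, (1 + ‖w‖ * ‖q‖ ^ i) :=
      (ih (q * w)).trans (by gcongr)
    have hpow : ‖q‖ ^ (n + 1) ≤ ‖q‖ ^ n := pow_le_pow_of_le_one (norm_nonneg q) hq_le n.le_succ
    calc ‖stieltjesWigert q (n + 1) w‖
        ≤ ‖stieltjesWigert q n w‖ + ‖q‖ ^ (n + 1) * ‖w‖ * ‖stieltjesWigert q n (q * w)‖ := by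
          rw [stieltjesWigert_succ hq, ← norm_pow, ← norm_mul, ← norm_mul]
          exact norm_add_le _ _
      _ ≤ (∏ i ∈ range n, (1 + ‖w‖ * ‖q‖ ^ i))
            + ‖q‖ ^ n * ‖w‖ * ∏ i ∈ range n, (1 + ‖w‖ * ‖q‖ ^ i) := by
          gcongr
          exact ih w
      _ = ∏ i ∈ range (n + 1), (1 + ‖w‖ * ‖q‖ ^ i) := by
          rw [prod_range_succ]
          ring

end stieltjesWigert

/-- The generating function `∑ (x;q)_n Pₙ(w) yⁿ` of the Stieltjes–Wigert polynomials `Pₙ`, weighted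
by `q`-Pochhammer symbols. -/
noncomputable def stieltjesWigertSeries (q x y w : ℂ) : ℂ :=
  ∑' n : ℕ, qPoch q x n * y ^ n * stieltjesWigert q n w

lemma Hfun_eq_stieltjesWigertSeries (q x y z : ℂ) :
    Hfun q x y z = stieltjesWigertSeries q x y (q * z ^ 2) := by
  refine tsum_congr fun n => ?_
  rw [stieltjesWigert, mul_sum]
  refine sum_congr rfl fun c _ => ?_
  ring

lemma stieltjesWigertSeries_term_identity {q : ℂ} (hq : ¬ IsOfFinOrder q) (x y w : ℂ) (n : ℕ) :
    x * y * (qPoch q x n * (q * y) ^ n * stieltjesWigert q n w)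
        - w * (qPoch q x (n + 1) * (q * y) ^ (n + 1) * stieltjesWigert q (n + 1) w)
        + (qPoch q x (n + 1) * y ^ (n + 1) * stieltjesWigert q (n + 1) w
          - y * (qPoch q x n * y ^ n * stieltjesWigert q n w)) =
      -q ^ 2 * (1 - x) * y * w ^ 2 *
        (qPoch q (q * x) n * (q * y) ^ n * stieltjesWigert q n (q ^ 2 * w)) := by
  linear_combination
    qPoch q x (n + 1) * y ^ (n + 1) * one_sub_mul_stieltjesWigert_succ hq n w
      + y ^ (n + 1) * stieltjesWigert q n w * qPoch_succ q x n
      - q ^ (n + 2) * y ^ (n + 1) * w ^ 2 * stieltjesWigert q n (q ^ 2 * w) * qPoch_succ' q x n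

section stieltjesWigertSeries

variable {q y : ℂ} (hq : ‖q‖ < 1) (hy : ‖y‖ < 1) (x w : ℂ)

include hq hy

lemma hasSum_stieltjesWigertSeries :
    HasSum (fun n => qPoch q x n * y ^ n * stieltjesWigert q n w)
      (stieltjesWigertSeries q x y w) := by
  refine Summable.hasSum (Summable.of_norm_bounded
    (g := fun n => Real.exp (‖x‖ / (1 - ‖q‖)) * ‖y‖ ^ n * Real.exp (‖w‖ / (1 - ‖q‖)))
    (((summable_geometric_of_lt_one (norm_nonneg y) hy).mul_left _).mul_right _) fun n => ?_)
  rw [norm_mul, norm_mul, norm_pow]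
  gcongr
  · exact (norm_qPoch_le_prod q x n).trans
      (prod_one_add_mul_pow_le_exp (norm_nonneg x) (norm_nonneg q) hq n)
  · exact (norm_stieltjesWigert_le_prod (not_isOfFinOrder_of_norm_lt_one hq) hq.le n w).trans
      (prod_one_add_mul_pow_le_exp (norm_nonneg w) (norm_nonneg q) hq n)

lemma hasSum_stieltjesWigertSeries_sub_one :
    HasSum (fun n => qPoch q x (n + 1) * y ^ (n + 1) * stieltjesWigert q (n + 1) w)
      (stieltjesWigertSeries q x y w - 1) := by
  simpa [qPoch_zero, stieltjesWigert_zero] using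
    (hasSum_nat_add_iff' 1).2 (hasSum_stieltjesWigertSeries hq hy x w)

theorem stieltjesWigertSeries_functional_equation :
    (x * y - w) * stieltjesWigertSeries q x (q * y) w + (1 - y) * stieltjesWigertSeries q x y w =
      -q ^ 2 * (1 - x) * y * w ^ 2 * stieltjesWigertSeries q (q * x) (q * y) (q ^ 2 * w)
        + 1 - w := by
  have hqy : ‖q * y‖ < 1 := by
    rw [norm_mul]
    exact mul_lt_one_of_nonneg_of_lt_one_left (norm_nonneg q) hq hy.le
  have hlhs := (((hasSum_stieltjesWigertSeries hq hqy x w).mul_left (x * y)).sub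
    ((hasSum_stieltjesWigertSeries_sub_one hq hqy x w).mul_left w)).add
    ((hasSum_stieltjesWigertSeries_sub_one hq hy x w).sub
      ((hasSum_stieltjesWigertSeries hq hy x w).mul_left y))
  have hrhs := (hasSum_stieltjesWigertSeries hq hqy (q * x) (q ^ 2 * w)).mul_left
    (-q ^ 2 * (1 - x) * y * w ^ 2)
  simp only [stieltjesWigertSeries_term_identity (not_isOfFinOrder_of_norm_lt_one hq)] at hlhs
  linear_combination hlhs.unique hrhs

end stieltjesWigertSeries

theorem stmt_1 (q x y z : ℂ) (hq : ‖q‖ < 1) (hy : ‖y‖ < 1) :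
    (x * y - q * z ^ 2) * Hfun q x (q * y) z + (1 - y) * Hfun q x y z
      = -q ^ 4 * (1 - x) * y * z ^ 4 * Hfun q (q * x) (q * y) (q * z) + 1 - q * z ^ 2 := by
  have hzz : q * (q * z) ^ 2 = q ^ 2 * (q * z ^ 2) := by ring
  simp only [Hfun_eq_stieltjesWigertSeries, hzz]
  linear_combination stieltjesWigertSeries_functional_equation hq hy x (q * z ^ 2)
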